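/- Let (Ω, 𝓕, P) be a probability space with a filtration (𝓕_t)_{t∈ℕ}, and let (D_t)_{t≥1} be a sequence of real random variables such that D_t is 𝓕_t-measurable, E[D_t | 𝓕_{t-1}] = 0 almost surely for every t, and |D_t| ≤ C almost surely for all t, for some constant C < ∞. Suppose there is σ² ≥ 0 such that (1/T) ∑_{t=1}^T E[D_t² | 𝓕_{t-1}] converges in probability to σ² as T → ∞. Then the distribution of T^{-1/2} ∑_{t=1}^T D_t converges weakly to the Gaussian distribution N(0, σ²). (This bounded-difference martingale central limit theorem is the core of the asymptotic-normality conclusion of Theorem S.1 for the IPW estimator of the average treatment effect, after the martingale-difference structure, boundedness, and Lindeberg condition of the errors have been verified.) -/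

import Mathlib

open MeasureTheory ProbabilityTheory Filter Topology

/-- The pull-out property in integrated form, for a bounded complex-valued factor. -/
lemma integral_condExp_smul {Ω : Type*} {m m0 : MeasurableSpace Ω} {P : Measure Ω}
    [IsProbabilityMeasure P] (hm : m ≤ m0) {W : Ω → ℂ} (hW : StronglyMeasurable[m] W) {M : ℝ}
    (hWM : ∀ᵐ ω ∂P, ‖W ω‖ ≤ M) {Y : Ω → ℝ} (hY : Integrable Y P) :
    ∫ ω, (P[Y|m]) ω • W ω ∂P = ∫ ω, Y ω • W ω ∂P := by
  have hYW : Integrable (fun ω => Y ω • W ω) P :=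
    hY.smul_bdd M (hW.mono hm).aestronglyMeasurable hWM
  have h := condExp_bilin_of_stronglyMeasurable_right (m := m) (μ := P)
    (ContinuousLinearMap.lsmul ℝ ℝ : ℝ →L[ℝ] ℂ →L[ℝ] ℂ) (f := Y) (g := W) hW hYW hY
  rw [← integral_condExp hm (f := fun ω => Y ω • W ω)]
  exact (integral_congr_ae h).symm

lemma norm_exp_mul_I_sub_taylor_le {x c : ℝ} (hx : |x| ≤ c) :
    ‖Complex.exp (x * Complex.I) - (1 + x * Complex.I - (x ^ 2 : ℝ) / 2)‖
      ≤ c ^ 3 * Real.exp c := by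
  have h := Complex.norm_exp_sub_sum_le_norm_mul_exp (x * Complex.I) 3
  have hn : ‖(x : ℂ) * Complex.I‖ = |x| := by simp
  rw [hn] at h
  have hs : ∑ k ∈ Finset.range 3, ((x : ℂ) * Complex.I) ^ k / (k.factorial : ℂ)
      = 1 + x * Complex.I - (x ^ 2 : ℝ) / 2 := by
    simp [Finset.sum_range_succ, mul_pow]
    ring
  rw [hs] at h
  have hc : 0 ≤ c := (abs_nonneg x).trans hx
  exact h.trans (by gcongr)

lemma norm_exp_neg_half_sub_taylor_le {v b : ℝ} (hv : |v| ≤ b) :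
    ‖Complex.exp (-(v : ℂ) / 2) - (1 - (v : ℂ) / 2)‖ ≤ b ^ 2 * Real.exp b := by
  have h := Complex.norm_exp_sub_sum_le_norm_mul_exp (-(v : ℂ) / 2) 2
  have hn : ‖-(v : ℂ) / 2‖ = |v| / 2 := by simp
  rw [hn] at h
  have hs : ∑ k ∈ Finset.range 2, (-(v : ℂ) / 2) ^ k / (k.factorial : ℂ) = 1 - (v : ℂ) / 2 := by
    simp [Finset.sum_range_succ]
    ring
  rw [hs] at h
  have hb : |v| / 2 ≤ b := by linarith [abs_nonneg v]
  exact h.trans (by gcongr)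

/-- Conditionally on `m`, replacing `exp (i X)` by `exp (- E[X² | m] / 2)` costs an error of third
order in the bound on the centred variable `X`. -/
lemma norm_integral_mul_exp_sub_le {Ω : Type*} {m m0 : MeasurableSpace Ω} {P : Measure Ω}
    [IsProbabilityMeasure P] (hm : m ≤ m0) {W : Ω → ℂ} (hW : StronglyMeasurable[m] W) {M : ℝ}
    (hWM : ∀ᵐ ω ∂P, ‖W ω‖ ≤ M) {X : Ω → ℝ} (hX : AEStronglyMeasurable X P) {c : ℝ}
    (hXc : ∀ᵐ ω ∂P, |X ω| ≤ c) (hX0 : P[X|m] =ᵐ[P] 0) :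
    ‖∫ ω, W ω * Complex.exp (X ω * Complex.I) ∂P
        - ∫ ω, W ω * Complex.exp (-((P[fun ω' => X ω' ^ 2|m]) ω : ℂ) / 2) ∂P‖
      ≤ M * (c ^ 3 * Real.exp c + c ^ 4 * Real.exp (c ^ 2)) := by
  set v : Ω → ℝ := P[fun ω' => X ω' ^ 2|m]
  have hvm : StronglyMeasurable[m] v := stronglyMeasurable_condExp
  have hX2c : ∀ᵐ ω ∂P, |X ω ^ 2| ≤ c ^ 2 := by
    filter_upwards [hXc] with ω h
    rw [abs_pow]
    gcongr
  have hvc : ∀ᵐ ω ∂P, |v ω| ≤ c ^ 2 := ae_bdd_abs_condExp_of_ae_bdd_abs hX2c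
  have hWa : AEStronglyMeasurable W P := (hW.mono hm).aestronglyMeasurable
  have hva : AEStronglyMeasurable v P := (hvm.mono hm).aestronglyMeasurable
  have hXi : Integrable X P := .of_bound hX c hXc
  have hX2i : Integrable (fun ω => X ω ^ 2) P := .of_bound (hX.pow 2) (c ^ 2) hX2c
  have hWi : Integrable W P := .of_bound hWa M hWM
  have hXW : Integrable (fun ω => X ω • W ω) P := hXi.smul_bdd M hWa hWM
  have hX2W : Integrable (fun ω => (X ω ^ 2) • W ω) P := hX2i.smul_bdd M hWa hWM
  have hvW : Integrable (fun ω => v ω • W ω) P :=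
    (integrable_condExp : Integrable v P).smul_bdd M hWa hWM
  have hXWzero : ∫ ω, X ω • W ω ∂P = 0 := by
    rw [← integral_condExp_smul hm hW hWM hXi]
    refine (integral_congr_ae ?_).trans (integral_zero _ _)
    filter_upwards [hX0] with ω h
    simp [h]
  have hX2Weq : ∫ ω, (X ω ^ 2) • W ω ∂P = ∫ ω, v ω • W ω ∂P :=
    (integral_condExp_smul hm hW hWM hX2i).symm
  have he1 : Integrable (fun ω => W ω * Complex.exp (X ω * Complex.I)) P := by
    refine hWi.mul_bdd (c := 1) ?_ (ae_of_all _ fun ω => (Complex.norm_exp_ofReal_mul_I _).le)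
    exact Complex.continuous_exp.comp_aestronglyMeasurable
      ((Complex.continuous_ofReal.comp_aestronglyMeasurable hX).mul_const _)
  have he2 : Integrable (fun ω => W ω * Complex.exp (-(v ω : ℂ) / 2)) P := by
    refine hWi.mul_bdd (c := Real.exp (c ^ 2)) ?_ ?_
    · exact (by fun_prop : Continuous fun x : ℝ => Complex.exp (-(x : ℂ) / 2))
        |>.comp_aestronglyMeasurable hva
    · filter_upwards [hvc] with ω h
      rw [Complex.norm_exp]
      refine Real.exp_le_exp.2 ?_
      have := neg_abs_le (v ω)
      have := abs_nonneg (v ω)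
      simp
      linarith
  have key : ∫ ω, W ω * Complex.exp (X ω * Complex.I) ∂P
        - ∫ ω, W ω * Complex.exp (-(v ω : ℂ) / 2) ∂P
      = ∫ ω, (W ω * (Complex.exp (X ω * Complex.I)
            - (1 + X ω * Complex.I - (X ω ^ 2 : ℝ) / 2))
          - W ω * (Complex.exp (-(v ω : ℂ) / 2) - (1 - (v ω : ℂ) / 2))) ∂P := by
    have hd : Integrable (fun ω => (X ω ^ 2) • W ω - v ω • W ω) P := hX2W.sub hvW
    have hl : Integrable (fun ω => Complex.I * (X ω • W ω)
        - (1 / 2 : ℂ) * ((X ω ^ 2) • W ω - v ω • W ω)) P :=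
      (hXW.const_mul _).sub (hd.const_mul _)
    have he : Integrable (fun ω => W ω * Complex.exp (X ω * Complex.I)
        - W ω * Complex.exp (-(v ω : ℂ) / 2)) P := he1.sub he2
    have hlin : ∫ ω, (Complex.I * (X ω • W ω)
        - (1 / 2 : ℂ) * ((X ω ^ 2) • W ω - v ω • W ω)) ∂P = 0 := by
      rw [integral_sub (hXW.const_mul _) (hd.const_mul _), integral_const_mul,
        integral_const_mul, integral_sub hX2W hvW, hXWzero, hX2Weq]
      simp
    rw [← integral_sub he1 he2, ← sub_zero (∫ ω, _ ∂P), ← hlin,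
      ← integral_sub he hl]
    congr 1
    ext ω
    simp only [Complex.real_smul]
    ring
  rw [key]
  refine (norm_integral_le_of_norm_le_const
    (C := M * (c ^ 3 * Real.exp c + c ^ 4 * Real.exp (c ^ 2))) ?_).trans (by simp)
  filter_upwards [hWM, hXc, hvc] with ω h1 h2 h3
  have hM : 0 ≤ M := (norm_nonneg _).trans h1
  refine (norm_sub_le _ _).trans ?_
  rw [norm_mul, norm_mul, mul_add]
  have h4 := norm_exp_neg_half_sub_taylor_le h3
  rw [← pow_mul] at h4
  gcongr
  exact norm_exp_mul_I_sub_taylor_le h2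

/-- For a martingale difference sequence bounded by `c`, the exponential of `i` times the partial
sum, compensated by half the conditional variance, has expectation close to `1`. -/
lemma norm_integral_exp_add_condVar_sub_one_le {Ω : Type*} {m0 : MeasurableSpace Ω}
    {P : Measure Ω} [IsProbabilityMeasure P] (𝓕 : Filtration ℕ m0) {X : ℕ → Ω → ℝ} {c : ℝ}
    (hX : ∀ t, Measurable[𝓕 (t + 1)] (X (t + 1)))
    (hX0 : ∀ t, P[X (t + 1)|𝓕 t] =ᵐ[P] 0)
    (hXc : ∀ t, ∀ᵐ ω ∂P, |X (t + 1) ω| ≤ c) (n : ℕ) :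
    ‖∫ ω, Complex.exp ((∑ t ∈ Finset.range n, X (t + 1) ω : ℝ) * Complex.I
        + (∑ t ∈ Finset.range n, (P[fun ω' => X (t + 1) ω' ^ 2|𝓕 t]) ω : ℝ) / 2) ∂P - 1‖
      ≤ n * (Real.exp (n * c ^ 2 / 2) * (c ^ 3 * Real.exp c + c ^ 4 * Real.exp (c ^ 2))) := by
  set v : ℕ → Ω → ℝ := fun t => P[fun ω' => X (t + 1) ω' ^ 2|𝓕 t]
  set B := Real.exp (n * c ^ 2 / 2) * (c ^ 3 * Real.exp c + c ^ 4 * Real.exp (c ^ 2)) with hB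
  have hvc : ∀ t, ∀ᵐ ω ∂P, |v t ω| ≤ c ^ 2 := fun t => by
    refine ae_bdd_abs_condExp_of_ae_bdd_abs ?_
    filter_upwards [hXc t] with ω h
    rw [abs_pow]
    gcongr
  have hvm : ∀ t, Measurable[𝓕 t] (v t) := fun t => stronglyMeasurable_condExp.measurable
  suffices H : ∀ k ≤ n, ‖∫ ω, Complex.exp ((∑ t ∈ Finset.range k, X (t + 1) ω : ℝ) * Complex.I
        + (∑ t ∈ Finset.range k, v t ω : ℝ) / 2) ∂P - 1‖ ≤ k * B from H n le_rfl
  intro k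
  induction k with
  | zero => simp
  | succ k ih =>
    intro hk
    have ih := ih (Nat.le_of_succ_le hk)
    set W : Ω → ℂ := fun ω => Complex.exp ((∑ t ∈ Finset.range k, X (t + 1) ω : ℝ) * Complex.I
        + (∑ t ∈ Finset.range (k + 1), v t ω : ℝ) / 2) with hWdef
    have hW : StronglyMeasurable[𝓕 k] W := by
      have h1 : Measurable[𝓕 k] fun ω => ∑ t ∈ Finset.range k, X (t + 1) ω :=
        Finset.measurable_fun_sum _ fun t ht =>
          (hX t).mono (𝓕.mono (Finset.mem_range.1 ht)) le_rfl
      have h2 : Measurable[𝓕 k] fun ω => ∑ t ∈ Finset.range (k + 1), v t ω :=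
        Finset.measurable_fun_sum _ fun t ht =>
          (hvm t).mono (𝓕.mono (Nat.le_of_lt_succ (Finset.mem_range.1 ht))) le_rfl
      exact (Complex.measurable_exp.comp (((Complex.measurable_ofReal.comp h1).mul_const _).add
        ((Complex.measurable_ofReal.comp h2).div_const _))).stronglyMeasurable
    have hWM : ∀ᵐ ω ∂P, ‖W ω‖ ≤ Real.exp (n * c ^ 2 / 2) := by
      filter_upwards [ae_all_iff.2 hvc] with ω h
      rw [hWdef, Complex.norm_exp]
      refine Real.exp_le_exp.2 ?_
      have h1 : ∑ t ∈ Finset.range (k + 1), v t ω ≤ ∑ t ∈ Finset.range (k + 1), c ^ 2 :=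
        Finset.sum_le_sum fun t _ => (le_abs_self _).trans (h t)
      have h2 : ((k + 1 : ℕ) : ℝ) * c ^ 2 ≤ n * c ^ 2 := by gcongr
      rw [Finset.sum_const, Finset.card_range, nsmul_eq_mul] at h1
      have h3 : ∀ a b : ℝ, ((a : ℂ) * Complex.I + (b : ℂ) / 2).re = b / 2 := by
        intro a b
        simp
      rw [h3]
      linarith
    have step := norm_integral_mul_exp_sub_le (𝓕.le k) hW hWM
      ((hX k).mono (𝓕.le _) le_rfl).aestronglyMeasurable (hXc k) (hX0 k)
    have e1 : ∀ ω, W ω * Complex.exp (X (k + 1) ω * Complex.I)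
        = Complex.exp ((∑ t ∈ Finset.range (k + 1), X (t + 1) ω : ℝ) * Complex.I
          + (∑ t ∈ Finset.range (k + 1), v t ω : ℝ) / 2) := fun ω => by
      rw [hWdef, ← Complex.exp_add, Finset.sum_range_succ (fun t => X (t + 1) ω)]
      push_cast
      congr 1
      ring
    have e2 : ∀ ω, W ω * Complex.exp (-(v k ω : ℂ) / 2)
        = Complex.exp ((∑ t ∈ Finset.range k, X (t + 1) ω : ℝ) * Complex.I
          + (∑ t ∈ Finset.range k, v t ω : ℝ) / 2) := fun ω => by
      rw [hWdef, ← Complex.exp_add, Finset.sum_range_succ (fun t => v t ω)]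
      push_cast
      congr 1
      ring
    simp only [e1] at step
    rw [integral_congr_ae (ae_of_all P e2)] at step
    have := (norm_sub_le_norm_sub_add_norm_sub _ _ _).trans (add_le_add step ih)
    refine this.trans (le_of_eq ?_)
    push_cast
    ring

/-- The martingale central limit theorem at the level of characteristic functions. -/
lemma tendsto_integral_exp_of_martingaleDifference {Ω : Type*} {m0 : MeasurableSpace Ω}
    {P : Measure Ω} [IsProbabilityMeasure P] (𝓕 : Filtration ℕ m0) {D : ℕ → Ω → ℝ} {C : ℝ}
    (hD : ∀ t, Measurable[𝓕 (t + 1)] (D (t + 1)))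
    (hD0 : ∀ t, P[D (t + 1)|𝓕 t] =ᵐ[P] 0)
    (hDC : ∀ t, ∀ᵐ ω ∂P, |D (t + 1) ω| ≤ C) {s : ℝ}
    (hvar : TendstoInMeasure P (fun (T : ℕ) ω => (T : ℝ)⁻¹ * ∑ t ∈ Finset.range T,
      (P[fun ω' => D (t + 1) ω' ^ 2|𝓕 t]) ω) atTop fun _ => s) (u : ℝ) :
    Tendsto (fun T : ℕ => ∫ ω, Complex.exp
        ((u * ((√(T : ℝ))⁻¹ * ∑ t ∈ Finset.range T, D (t + 1) ω) : ℝ) * Complex.I) ∂P)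
      atTop (𝓝 (Complex.exp (-(u ^ 2 * s / 2 : ℝ)))) := by
  have hC : 0 ≤ C := by
    obtain ⟨ω, h⟩ := (hDC 0).exists
    exact (abs_nonneg _).trans h
  set V : ℕ → Ω → ℝ := fun T ω => (T : ℝ)⁻¹ * ∑ t ∈ Finset.range T,
      (P[fun ω' => D (t + 1) ω' ^ 2|𝓕 t]) ω with hV
  set S : ℕ → Ω → ℝ := fun T ω => u * ((√(T : ℝ))⁻¹ * ∑ t ∈ Finset.range T, D (t + 1) ω) with hS
  have hSm : ∀ T, Measurable (S T) := fun T =>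
    ((Finset.measurable_fun_sum _ fun t _ => (hD t).mono (𝓕.le _) le_rfl).const_mul _).const_mul _
  have hVm : ∀ T, Measurable (V T) := fun T =>
    (Finset.measurable_fun_sum _ fun t _ =>
      (stronglyMeasurable_condExp.mono (𝓕.le t)).measurable).const_mul _
  have hVC : ∀ᵐ ω ∂P, ∀ T, V T ω ≤ C ^ 2 := by
    have h : ∀ᵐ ω ∂P, ∀ t, |(P[fun ω' => D (t + 1) ω' ^ 2|𝓕 t]) ω| ≤ C ^ 2 := by
      refine ae_all_iff.2 fun t => ae_bdd_abs_condExp_of_ae_bdd_abs ?_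
      filter_upwards [hDC t] with ω h
      rw [abs_pow]
      gcongr
    filter_upwards [h] with ω h T
    rcases Nat.eq_zero_or_pos T with rfl | hT
    · simp only [hV, Finset.range_zero, Finset.sum_empty, mul_zero]
      positivity
    · have h1 := Finset.sum_le_sum fun t (_ : t ∈ Finset.range T) => (le_abs_self _).trans (h t)
      rw [Finset.sum_const, Finset.card_range, nsmul_eq_mul] at h1
      exact (inv_mul_le_iff₀ (by positivity)).2 h1
  -- the compensated exponential has expectation tending to `1`
  have hcomp : Tendsto (fun T : ℕ => ∫ ω, Complex.exp (S T ω * Complex.I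
      + (u ^ 2 * V T ω : ℝ) / 2) ∂P) atTop (𝓝 1) := by
    have hbound : ∀ T : ℕ, 0 < T → ‖∫ ω, Complex.exp (S T ω * Complex.I
        + (u ^ 2 * V T ω : ℝ) / 2) ∂P - 1‖ ≤ Real.exp ((|u| * C) ^ 2 / 2)
          * ((|u| * C) ^ 3 * (√(T : ℝ))⁻¹ * Real.exp (|u| * C * (√(T : ℝ))⁻¹)
            + (|u| * C) ^ 4 * (√(T : ℝ))⁻¹ ^ 2 * Real.exp ((|u| * C * (√(T : ℝ))⁻¹) ^ 2)) := by
      intro T hT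
      have hT' : (0 : ℝ) < T := by exact_mod_cast hT
      set r := (√(T : ℝ))⁻¹ with hr
      have hr0 : 0 ≤ r := by positivity
      have hr2 : r ^ 2 = (T : ℝ)⁻¹ := by rw [hr, inv_pow, Real.sq_sqrt hT'.le]
      have hTr : T * r ^ 2 = 1 := by rw [hr2, mul_inv_cancel₀ hT'.ne']
      have h := norm_integral_exp_add_condVar_sub_one_le (P := P) 𝓕
        (X := fun t ω => u * r * D t ω) (c := |u| * C * r) (fun t => (hD t).const_mul _)
        (fun t => by
          refine (condExp_smul (u * r) (D (t + 1)) (𝓕 t)).trans ?_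
          filter_upwards [hD0 t] with ω h
          simp [h])
        (fun t => by
          filter_upwards [hDC t] with ω h
          rw [abs_mul, abs_mul, abs_of_nonneg hr0, mul_right_comm]
          gcongr) T
      have hcond : ∀ᵐ ω ∂P, ∀ t, (P[fun ω' => (u * r * D (t + 1) ω') ^ 2|𝓕 t]) ω
          = (u ^ 2 * r ^ 2) * (P[fun ω' => D (t + 1) ω' ^ 2|𝓕 t]) ω := by
        refine ae_all_iff.2 fun t => ?_
        have h := condExp_smul (μ := P) (u ^ 2 * r ^ 2) (fun ω' => D (t + 1) ω' ^ 2) (𝓕 t)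
        have e : (fun ω' => (u * r * D (t + 1) ω') ^ 2)
            = (u ^ 2 * r ^ 2) • fun ω' => D (t + 1) ω' ^ 2 := by
          ext ω
          simp [mul_pow]
        rw [e]
        filter_upwards [h] with ω h
        simpa using h
      rw [integral_congr_ae (g := fun ω => Complex.exp (S T ω * Complex.I
        + (u ^ 2 * V T ω : ℝ) / 2)) ?_] at h
      · refine h.trans (le_of_eq ?_)
        have e1 : (T : ℝ) * (|u| * C * r) ^ 2 / 2 = (|u| * C) ^ 2 / 2 := by
          linear_combination ((|u| * C) ^ 2 / 2) * hTr
        rw [e1]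
        linear_combination (Real.exp ((|u| * C) ^ 2 / 2)
          * ((|u| * C) ^ 3 * r * Real.exp (|u| * C * r)
            + (|u| * C) ^ 4 * r ^ 2 * Real.exp ((|u| * C * r) ^ 2))) * hTr
      · filter_upwards [hcond] with ω h
        simp only [h, ← Finset.mul_sum, hS, hV, hr2]
        congr 3
        · congr 1
          ring
        · congr 1
          ring
    refine tendsto_iff_norm_sub_tendsto_zero.2 (squeeze_zero_norm'
      (a := fun T : ℕ => Real.exp ((|u| * C) ^ 2 / 2)
          * ((|u| * C) ^ 3 * (√(T : ℝ))⁻¹ * Real.exp (|u| * C * (√(T : ℝ))⁻¹)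
            + (|u| * C) ^ 4 * (√(T : ℝ))⁻¹ ^ 2 * Real.exp ((|u| * C * (√(T : ℝ))⁻¹) ^ 2))) ?_ ?_)
    · filter_upwards [eventually_gt_atTop 0] with T hT
      rw [norm_norm]
      exact hbound T hT
    · have hr : Tendsto (fun T : ℕ => (√(T : ℝ))⁻¹) atTop (𝓝 0) :=
        (Real.tendsto_sqrt_atTop.comp tendsto_natCast_atTop_atTop).inv_tendsto_atTop
      have hg : Continuous fun r : ℝ => Real.exp ((|u| * C) ^ 2 / 2)
          * ((|u| * C) ^ 3 * r * Real.exp (|u| * C * r)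
            + (|u| * C) ^ 4 * r ^ 2 * Real.exp ((|u| * C * r) ^ 2)) := by fun_prop
      have h := (hg.tendsto 0).comp hr
      simp only [mul_zero, zero_mul, ne_eq, OfNat.ofNat_ne_zero, not_false_eq_true, zero_pow,
        add_zero] at h
      exact h
  -- the compensator can be replaced by its limit
  have hdiff : Tendsto (fun T : ℕ => ∫ ω, Complex.exp (S T ω * Complex.I)
      * (Complex.exp ((u ^ 2 * s : ℝ) / 2) - Complex.exp ((u ^ 2 * V T ω : ℝ) / 2)) ∂P)
      atTop (𝓝 0) := by
    refine tendsto_of_subseq_tendsto fun ns hns => ?_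
    obtain ⟨ms, -, hms⟩ := TendstoInMeasure.exists_seq_tendsto_ae fun ε hε => (hvar ε hε).comp hns
    refine ⟨ms, ?_⟩
    rw [← integral_zero Ω ℂ (μ := P)]
    refine tendsto_integral_of_dominated_convergence
      (fun _ => Real.exp (u ^ 2 * s / 2) + Real.exp (u ^ 2 * C ^ 2 / 2)) (fun k => ?_)
      (integrable_const _) (fun k => ?_) ?_
    · have h1 := hSm (ns (ms k))
      have h2 := hVm (ns (ms k))
      exact Measurable.aestronglyMeasurable (by fun_prop)
    · filter_upwards [hVC] with ω h
      rw [norm_mul, Complex.norm_exp_ofReal_mul_I, one_mul]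
      refine (norm_sub_le _ _).trans ?_
      rw [Complex.norm_exp, Complex.norm_exp]
      have h3 : ∀ b : ℝ, ((b : ℂ) / 2).re = b / 2 := fun b => by simp
      rw [h3, h3]
      gcongr
      exact h _
    · filter_upwards [hms] with ω h
      have hg : Continuous fun x : ℝ => Complex.exp ((u ^ 2 * s : ℝ) / 2)
          - Complex.exp ((u ^ 2 * x : ℝ) / 2) := by fun_prop
      have h1 : Tendsto (fun k => Complex.exp ((u ^ 2 * s : ℝ) / 2)
          - Complex.exp ((u ^ 2 * V (ns (ms k)) ω : ℝ) / 2)) atTop (𝓝 0) := by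
        simpa [Function.comp_def] using (hg.tendsto s).comp h
      refine squeeze_zero_norm (fun k => ?_) (tendsto_zero_iff_norm_tendsto_zero.1 h1)
      rw [norm_mul, Complex.norm_exp_ofReal_mul_I, one_mul]
  have hsum := (hdiff.add hcomp).const_mul (Complex.exp (-(u ^ 2 * s / 2 : ℝ)))
  rw [zero_add, mul_one] at hsum
  refine hsum.congr fun T => ?_
  have hSi : Integrable (fun ω => Complex.exp (S T ω * Complex.I)) P := by
    have h1 := hSm T
    exact .of_bound (Measurable.aestronglyMeasurable (by fun_prop)) 1
      (ae_of_all _ fun ω => (Complex.norm_exp_ofReal_mul_I _).le)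
  have hVi : Integrable (fun ω => Complex.exp (S T ω * Complex.I + (u ^ 2 * V T ω : ℝ) / 2)) P := by
    have h1 := hSm T
    have h2 := hVm T
    refine .of_bound (Measurable.aestronglyMeasurable (by fun_prop))
      (Real.exp (u ^ 2 * C ^ 2 / 2)) ?_
    filter_upwards [hVC] with ω h
    rw [Complex.norm_exp]
    have h3 : ∀ a b : ℝ, ((a : ℂ) * Complex.I + (b : ℂ) / 2).re = b / 2 := fun a b => by simp
    rw [h3]
    gcongr
    exact h T
  have e : ∀ ω, Complex.exp (S T ω * Complex.I)
      * (Complex.exp ((u ^ 2 * s : ℝ) / 2) - Complex.exp ((u ^ 2 * V T ω : ℝ) / 2))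
      = Complex.exp (S T ω * Complex.I) * Complex.exp ((u ^ 2 * s : ℝ) / 2)
        - Complex.exp (S T ω * Complex.I + (u ^ 2 * V T ω : ℝ) / 2) := fun ω => by
    rw [Complex.exp_add]
    ring
  simp only [e]
  rw [integral_sub (hSi.mul_const _) hVi, sub_add_cancel, integral_mul_const, mul_left_comm,
    ← Complex.exp_add]
  have e0 : -((u ^ 2 * s / 2 : ℝ) : ℂ) + (u ^ 2 * s : ℝ) / 2 = 0 := by
    push_cast
    ring
  rw [e0, Complex.exp_zero, mul_one]

/-- Bounded-difference martingale central limit theorem: if `(D t)` is a bounded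
martingale difference sequence whose averaged conditional second moments converge
in probability to `σ²`, then `T^{-1/2} ∑_{t=1}^T D t` converges in distribution
to `N(0, σ²)`. -/
theorem stmt_0
    {Ω : Type*} {m0 : MeasurableSpace Ω} (P : Measure Ω) [IsProbabilityMeasure P]
    (𝓕 : Filtration ℕ m0)
    (D : ℕ → Ω → ℝ) (C : ℝ)
    (hadapt : ∀ t, 1 ≤ t → Measurable[𝓕 t] (D t))
    (hint : ∀ t, 1 ≤ t → Integrable (D t) P)
    (hmdg : ∀ t, 1 ≤ t → P[D t|𝓕 (t - 1)] =ᵐ[P] 0)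
    (hbdd : ∀ t, 1 ≤ t → ∀ᵐ ω ∂P, |D t ω| ≤ C)
    (σ2 : NNReal)
    (hvar : ∀ ε : ℝ, 0 < ε →
      Tendsto
        (fun T : ℕ =>
          P {ω | ε < |(T : ℝ)⁻¹ * ∑ t ∈ Finset.Icc 1 T,
              (P[fun ω' => D t ω' ^ 2|𝓕 (t - 1)]) ω - (σ2 : ℝ)|})
        atTop (𝓝 0)) :
    ∀ f : BoundedContinuousFunction ℝ ℝ,
      Tendsto
        (fun T : ℕ =>
          ∫ ω, f ((Real.sqrt (T : ℝ))⁻¹ * ∑ t ∈ Finset.Icc 1 T, D t ω) ∂P)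
        atTop (𝓝 (∫ x, f x ∂(gaussianReal 0 σ2))) := by
  have hsum : ∀ (T : ℕ) (g : ℕ → ℝ), ∑ t ∈ Finset.Icc 1 T, g t
      = ∑ t ∈ Finset.range T, g (t + 1) := fun T g => by
    rw [Finset.range_eq_Ico, Finset.sum_Ico_add' g 0 T 1]
    rfl
  have hmeas : TendstoInMeasure P (fun (T : ℕ) ω => (T : ℝ)⁻¹ * ∑ t ∈ Finset.range T,
      (P[fun ω' => D (t + 1) ω' ^ 2|𝓕 t]) ω) atTop fun _ => (σ2 : ℝ) := by
    rw [tendstoInMeasure_iff_dist]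
    intro ε hε
    refine tendsto_of_tendsto_of_tendsto_of_le_of_le tendsto_const_nhds
      (hvar (ε / 2) (by positivity)) (fun _ => zero_le) fun T => measure_mono fun ω hω => ?_
    simp only [Set.mem_ofPred_eq, hsum, Nat.add_sub_cancel, Real.dist_eq] at hω ⊢
    linarith
  have hchar := tendsto_integral_exp_of_martingaleDifference 𝓕
    (fun t => hadapt (t + 1) (Nat.le_add_left 1 t)) (fun t => hmdg (t + 1) (Nat.le_add_left 1 t))
    (fun t => hbdd (t + 1) (Nat.le_add_left 1 t)) hmeas
  set S : ℕ → Ω → ℝ := fun T ω => (√(T : ℝ))⁻¹ * ∑ t ∈ Finset.Icc 1 T, D t ω with hS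
  have hSm : ∀ T, Measurable (S T) := fun T =>
    (Finset.measurable_fun_sum _ fun t ht =>
      (hadapt t (Finset.mem_Icc.1 ht).1).mono (𝓕.le t) le_rfl).const_mul _
  let μ : ℕ → ProbabilityMeasure ℝ := fun T =>
    ⟨P.map (S T), Measure.isProbabilityMeasure_map (hSm T).aemeasurable⟩
  let μ₀ : ProbabilityMeasure ℝ := ⟨gaussianReal 0 σ2, inferInstance⟩
  have hlim : Tendsto μ atTop (𝓝 μ₀) := by
    refine ProbabilityMeasure.tendsto_iff_tendsto_charFun.2 fun u => ?_
    have hgauss : charFun (μ₀ : Measure ℝ) u = Complex.exp (-(u ^ 2 * σ2 / 2 : ℝ)) := by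
      refine (charFun_gaussianReal u).trans ?_
      push_cast
      congr 1
      ring
    rw [hgauss]
    refine (hchar u).congr fun T => ?_
    change _ = charFun (P.map (S T)) u
    rw [charFun_apply_real, integral_map (hSm T).aemeasurable
      (Measurable.aestronglyMeasurable (by fun_prop))]
    simp only [hS, hsum, Complex.ofReal_mul]
  intro f
  refine (ProbabilityMeasure.tendsto_iff_forall_integral_tendsto.1 hlim f).congr fun T => ?_
  exact integral_map (hSm T).aemeasurable f.continuous.aestronglyMeasurable
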